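/- Let I ⊂ ℝ be a bounded interval of positive length |I| and let J ⊆ I be a measurable set with Lebesgue measure |J| > 0. Let D_I = {z ∈ ℂ : dist(z, I) < 4·|I|}, and let Φ be a bounded analytic function on D_I that is not identically zero. Set M = sup_{z ∈ D_I} |Φ(z)| and m = sup_{x ∈ I} |Φ(x)|. Then ∫_I |Φ(s)|² ds ≤ (300·|I|/|J|)^{2·ln(M/m)/ln 2 + 1} · ∫_J |Φ(s)|² ds. -/

import Mathlib

open MeasureTheory Set Complex

noncomputable section

lemma kov_sep (k : ℕ) : ∀ (E : Set ℝ), BddBelow E → ∀ δ : ℝ, 0 < δ →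
    ENNReal.ofReal (k * δ) < volume E →
    ∃ x : ℕ → ℝ, (∀ i ≤ k, x i ∈ E) ∧ (∀ i < k, x i + δ ≤ x (i+1)) := by
  induction k with
  | zero =>
    intro E _ δ _ h
    have hne : E.Nonempty := by
      rw [nonempty_iff_ne_empty]; rintro rfl; simp at h
    obtain ⟨y, hy⟩ := hne
    exact ⟨fun _ => y, fun _ _ => hy, fun i hi => by omega⟩
  | succ k ih =>
    intro E hE δ hδ h
    have hne : E.Nonempty := by
      rw [nonempty_iff_ne_empty]; rintro rfl; simp at h
    obtain ⟨q, hq0, hq1, hq2⟩ := ENNReal.lt_iff_exists_real_btwn.1 h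
    have hq : (k+1) * δ < q := by
      have := (ENNReal.ofReal_lt_ofReal_iff_of_nonneg (by positivity)).1 hq1
      push_cast at this; exact this
    obtain ⟨y, hy, hys⟩ := exists_lt_of_csInf_lt hne
      (show sInf E < sInf E + (q - (k+1) * δ) by linarith)
    have hsub : E ⊆ Icc (sInf E) (y + δ) ∪ (E ∩ Ici (y + δ)) := by
      intro z hz
      rcases le_total z (y + δ) with h1 | h1
      · exact Or.inl ⟨csInf_le hE hz, h1⟩
      · exact Or.inr ⟨hz, h1⟩
    have hvol : ENNReal.ofReal (k * δ) < volume (E ∩ Ici (y + δ)) := by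
      by_contra hcon
      rw [not_lt] at hcon
      have h1 : volume E ≤ ENNReal.ofReal (y + δ - sInf E) + ENNReal.ofReal (k * δ) := by
        refine (measure_mono hsub).trans ((measure_union_le _ _).trans ?_)
        rw [Real.volume_Icc]
        gcongr
      have h0 := csInf_le hE hy
      rw [← ENNReal.ofReal_add (by linarith) (by positivity)] at h1
      have h2 : ENNReal.ofReal (y + δ - sInf E + k * δ) ≤ ENNReal.ofReal q :=
        ENNReal.ofReal_le_ofReal (by linarith)
      exact absurd hq2 (not_lt.2 (h1.trans h2))
    obtain ⟨x, hx1, hx2⟩ := ih _ (hE.mono inter_subset_left) δ hδ hvol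
    refine ⟨fun i => Nat.casesOn i y x, ?_, ?_⟩
    · intro i hi
      cases i with
      | zero => exact hy
      | succ i => exact (hx1 i (by omega)).1
    · intro i hi
      cases i with
      | zero => exact (hx1 0 (by omega)).2
      | succ i => exact hx2 i (by omega)

lemma kov_gap (k : ℕ) (x : ℕ → ℝ) (δ : ℝ) (hx : ∀ i < k, x i + δ ≤ x (i+1)) (i j : ℕ)
    (hij : i ≤ j) (hj : j ≤ k) : x i + (j - i) * δ ≤ x j := by
  induction j, hij using Nat.le_induction with
  | base => simp
  | succ n hn ih =>
    have := ih (by omega)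
    have := hx n (by omega)
    push_cast
    linarith

lemma kov_gap' (k : ℕ) (x : ℕ → ℝ) (δ : ℝ) (hx : ∀ i < k, x i + δ ≤ x (i+1))
    (i j : ℕ) (hi : i ≤ k) (hj : j ≤ k) : |(i:ℝ) - j| * δ ≤ |x i - x j| := by
  rcases le_total i j with h | h
  · have := kov_gap k x δ hx i j h hj
    have h' : (i:ℝ) ≤ j := by exact_mod_cast h
    rw [abs_sub_comm, abs_of_nonneg (by linarith), abs_sub_comm]
    exact le_trans (by linarith) (le_abs_self _)
  · have := kov_gap k x δ hx j i h hi
    have h' : (j:ℝ) ≤ i := by exact_mod_cast h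
    rw [abs_of_nonneg (by linarith)]
    exact le_trans (by linarith) (le_abs_self _)

lemma kov_prod (j d : ℕ) : ∏ i ∈ (Finset.range (j+d+1)).erase j, |(j:ℝ) - i|
    = j.factorial * d.factorial := by
  induction d with
  | zero =>
    rw [add_zero, Finset.range_add_one, Finset.erase_insert (by simp)]
    rw [← Finset.prod_range_reflect]
    simp only [Nat.factorial_zero, Nat.cast_one, mul_one]
    rw [← Finset.prod_range_add_one_eq_factorial]
    push_cast
    refine Finset.prod_congr rfl fun i hi => ?_
    have hi := Finset.mem_range.1 hi
    rw [Nat.cast_sub (by omega), Nat.cast_sub (by omega)]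
    rw [show (j:ℝ) - (j - (1:ℕ) - i) = i + 1 by push_cast; ring]
    exact abs_of_nonneg (by positivity)
  | succ d ih =>
    rw [show j + (d+1) + 1 = (j+d+1) + 1 by ring, Finset.range_add_one,
      Finset.erase_insert_of_ne (by omega), Finset.prod_insert (by simp), ih]
    rw [Nat.factorial_succ]
    push_cast
    rw [show (j:ℝ) - (j+d+1) = -(d+1) by ring, abs_neg, abs_of_nonneg (by positivity)]
    ring

lemma kov_fact (k : ℕ) : ((k:ℝ)+1)^k ≤ 3^k * k.factorial := by
  induction k with
  | zero => simp
  | succ k ih =>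
    have h1 : ((k:ℝ)+1+1)^(k+1) ≤ 3 * ((k:ℝ)+1)^(k+1) := by
      have h2 : (1 + 1/((k:ℝ)+1))^(k+1) ≤ 3 := by
        have h3 : (1 + 1/((k:ℝ)+1)) ≤ Real.exp (1/((k:ℝ)+1)) := by
          linarith [Real.add_one_le_exp (1/((k:ℝ)+1))]
        calc (1 + 1/((k:ℝ)+1))^(k+1) ≤ (Real.exp (1/((k:ℝ)+1)))^(k+1) := by gcongr
          _ = Real.exp 1 := by
            rw [← Real.exp_nat_mul]; congr 1; push_cast; field_simp
          _ ≤ 3 := by linarith [Real.exp_one_lt_d9]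
      have h4 : ((k:ℝ)+1+1) = (1 + 1/((k:ℝ)+1)) * (k+1) := by field_simp
      rw [h4, mul_pow]
      gcongr
    rw [Nat.factorial_succ]
    push_cast
    calc ((k:ℝ)+1+1)^(k+1) ≤ 3 * ((k:ℝ)+1)^(k+1) := h1
      _ = 3 * (k+1) * ((k:ℝ)+1)^k := by ring
      _ ≤ 3 * (k+1) * (3^k * k.factorial) := by gcongr
      _ = _ := by ring

lemma kov_sum (k : ℕ) : ∑ j ∈ Finset.range (k+1), (1:ℝ) / (j.factorial * (k-j).factorial)
    = 2^k / k.factorial := by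
  have h : (2:ℝ)^k = ∑ j ∈ Finset.range (k+1), (k.choose j : ℝ) := by
    exact_mod_cast (Nat.sum_range_choose k).symm
  rw [h, Finset.sum_div]
  refine Finset.sum_congr rfl fun j hj => ?_
  have hj := Finset.mem_range.1 hj
  rw [Nat.cast_choose ℝ (by omega : j ≤ k)]
  have := Nat.factorial_pos k
  field_simp

lemma kov_cauchy (s : Finset ℕ) (v : ℕ → ℂ) (hinj : Set.InjOn v s) (hs : s.Nonempty)
    (Φ : ℂ → ℂ) (c : ℂ) (r : ℝ) (hr : 0 < r) (hΦ : DifferentiableOn ℂ Φ (Metric.closedBall c r))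
    (hv : ∀ i ∈ s, v i ∈ Metric.ball c r) :
    (∮ z in C(c, r), (∏ i ∈ s, (z - v i))⁻¹ * Φ z) =
      2 * Real.pi * I * ∑ i ∈ s, Lagrange.nodalWeight s v i * Φ (v i) := by
  have hne : ∀ z ∈ Metric.sphere c r, ∀ i ∈ s, z ≠ v i := by
    intro z hz i hi h
    have h1 := hv i hi
    rw [← h, Metric.mem_ball] at h1
    rw [Metric.mem_sphere] at hz
    linarith
  have h1 : (∮ z in C(c, r), (∏ i ∈ s, (z - v i))⁻¹ * Φ z) =
      ∮ z in C(c, r), ∑ i ∈ s, Lagrange.nodalWeight s v i • ((z - v i)⁻¹ • Φ z) := by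
    refine circleIntegral.integral_congr hr.le fun z hz => ?_
    have h := Lagrange.eval_interpolate_not_at_node (s := s) (v := v) (x := z) 1 (hne z hz)
    rw [Lagrange.interpolate_one hinj hs, Polynomial.eval_one, Lagrange.eval_nodal] at h
    simp only [Pi.one_apply, mul_one] at h
    rw [inv_eq_of_mul_eq_one_right h.symm, Finset.sum_mul]
    simp [mul_assoc]
  rw [h1, circleIntegral.integral_fun_sum, Finset.mul_sum]
  · refine Finset.sum_congr rfl fun i hi => ?_
    rw [circleIntegral.integral_smul, hΦ.circleIntegral_sub_inv_smul (hv i hi)]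
    simp only [smul_eq_mul]
    ring
  · intro i hi
    refine ContinuousOn.circleIntegrable hr.le ?_
    have h2 : ContinuousOn (fun z => (z - v i)⁻¹) (Metric.sphere c r) :=
      ContinuousOn.inv₀ (by fun_prop) fun z hz => sub_ne_zero.2 (hne z hz i hi)
    have h3 : ContinuousOn Φ (Metric.sphere c r) :=
      hΦ.continuousOn.mono Metric.sphere_subset_closedBall
    exact (h2.smul h3).const_smul (Lagrange.nodalWeight s v i)

lemma kov_interp (k : ℕ) (x : ℕ → ℝ) (hx : Set.InjOn x (Finset.range (k+1))) (t L M : ℝ)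
    (hL : 0 < L) (ht : ∀ i ∈ Finset.range (k+1), t ≠ x i)
    (htL : ∀ i ∈ Finset.range (k+1), |t - x i| ≤ L) (Φ : ℂ → ℂ)
    (hΦ : DifferentiableOn ℂ Φ (Metric.closedBall (t:ℂ) (7/2*L)))
    (hM : ∀ z ∈ Metric.closedBall (t:ℂ) (7/2*L), ‖Φ z‖ ≤ M) :
    ‖Φ t‖ ≤ M * (2/5)^(k+1) + ∑ j ∈ Finset.range (k+1), ‖Φ (x j)‖ *
      ∏ i ∈ (Finset.range (k+1)).erase j, (|t - x i| / |x j - x i|) := by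
  classical
  have hM0 : 0 ≤ M := (norm_nonneg _).trans (hM t (Metric.mem_closedBall_self (by positivity)))
  set v : ℕ → ℂ := fun i => if i = k+1 then (t:ℂ) else (x i : ℂ) with hv
  have hvt : v (k+1) = t := by simp [hv]
  have hvx : ∀ i ∈ Finset.range (k+1), v i = x i := by
    intro i hi
    have := Finset.mem_range.1 hi
    simp [hv, this.ne]
  have hs : Finset.range (k+2) = insert (k+1) (Finset.range (k+1)) := Finset.range_add_one
  have hnot : (k+1) ∉ Finset.range (k+1) := by simp
  have hinj : Set.InjOn v (Finset.range (k+2)) := by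
    intro i hi j hj hij
    rw [Finset.mem_coe, hs, Finset.mem_insert] at hi hj
    rcases hi with rfl | hi <;> rcases hj with rfl | hj
    · rfl
    · rw [hvt, hvx j hj] at hij
      exact absurd (by exact_mod_cast hij) (ht j hj)
    · rw [hvt, hvx i hi] at hij
      exact absurd (by exact_mod_cast hij.symm) (ht i hi)
    · rw [hvx j hj, hvx i hi] at hij
      exact hx hi hj (by exact_mod_cast hij)
  have hball : ∀ i ∈ Finset.range (k+1), ‖(t:ℂ) - x i‖ ≤ L := by
    intro i hi
    rw [← Complex.ofReal_sub, Complex.norm_real]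
    exact htL i hi
  have hc := kov_cauchy (Finset.range (k+2)) v hinj (by simp) Φ t (7/2*L) (by positivity) hΦ (by
    intro i hi
    rw [hs, Finset.mem_insert] at hi
    rcases hi with rfl | hi
    · rw [hvt]; exact Metric.mem_ball_self (by positivity)
    · rw [hvx i hi, Metric.mem_ball', dist_eq_norm]
      linarith [hball i hi])
  set S := ∑ i ∈ Finset.range (k+2), Lagrange.nodalWeight (Finset.range (k+2)) v i * Φ (v i) with hS
  have hSn : ‖S‖ ≤ M * ((5/2*L)^(k+1))⁻¹ := by
    have h1 : ‖∮ z in C((t:ℂ), 7/2*L), (∏ i ∈ Finset.range (k+2), (z - v i))⁻¹ * Φ z‖ ≤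
        2 * Real.pi * (7/2*L) * (((5/2*L)^(k+1) * (7/2*L))⁻¹ * M) := by
      refine circleIntegral.norm_integral_le_of_norm_le_const (by positivity) fun z hz => ?_
      rw [norm_mul, norm_inv]
      have hz' : ‖z - t‖ = 7/2*L := by simpa [dist_eq_norm] using hz
      have h2 := hM z (Metric.sphere_subset_closedBall hz)
      gcongr
      rw [hs, Finset.prod_insert hnot, hvt, norm_mul, hz', mul_comm]
      gcongr
      rw [norm_prod]
      calc (5/2*L)^(k+1) = ∏ i ∈ Finset.range (k+1), (5/2*L) := by simp
        _ ≤ _ := by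
          refine Finset.prod_le_prod (fun _ _ => by positivity) fun i hi => ?_
          rw [hvx i hi]
          have h3 := norm_sub_norm_le (z - t) ((x i : ℂ) - t)
          rw [norm_sub_rev (x i : ℂ) t, hz', sub_sub_sub_cancel_right] at h3
          linarith [hball i hi]
    rw [hc, norm_mul] at h1
    have h2 : ‖(2 * Real.pi * I : ℂ)‖ = 2 * Real.pi := by
      simp [abs_of_pos Real.pi_pos]
    rw [h2, mul_assoc (2 * Real.pi)] at h1
    have h3 := le_of_mul_le_mul_left h1 (by positivity)
    refine h3.trans (le_of_eq ?_)
    field_simp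
  set P : ℂ := ∏ i ∈ Finset.range (k+1), ((t:ℂ) - x i) with hP
  have hPn : ‖P‖ ≤ L^(k+1) := by
    rw [hP, norm_prod]
    calc _ ≤ ∏ i ∈ Finset.range (k+1), L :=
          Finset.prod_le_prod (fun _ _ => norm_nonneg _) hball
      _ = _ := by simp
  have hP0 : P ≠ 0 := by
    rw [hP, Finset.prod_ne_zero_iff]
    intro i hi
    rw [sub_ne_zero]
    exact_mod_cast ht i hi
  have key : Φ t = P * S + ∑ j ∈ Finset.range (k+1), Φ (x j) *
      ∏ i ∈ (Finset.range (k+1)).erase j, (((t:ℂ) - x i) / (x j - x i)) := by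
    have hw1 : Lagrange.nodalWeight (Finset.range (k+2)) v (k+1) = P⁻¹ := by
      rw [Lagrange.nodalWeight, hs, Finset.erase_insert hnot, hP, ← Finset.prod_inv_distrib]
      refine Finset.prod_congr rfl fun i hi => ?_
      rw [hvt, hvx i hi]
    have hw2 : ∀ j ∈ Finset.range (k+1), P * Lagrange.nodalWeight (Finset.range (k+2)) v j =
        - ∏ i ∈ (Finset.range (k+1)).erase j, (((t:ℂ) - x i) / (x j - x i)) := by
      intro j hj
      have hjk : (k+1) ≠ j := fun h => hnot (h ▸ hj)
      rw [Lagrange.nodalWeight, hs, Finset.erase_insert_of_ne hjk,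
        Finset.prod_insert (fun h => hnot (Finset.mem_of_mem_erase h)), hvt, hvx j hj, hP,
        ← Finset.mul_prod_erase _ _ hj]
      have e1 : ∏ i ∈ (Finset.range (k+1)).erase j, ((x j : ℂ) - v i)⁻¹ =
          ∏ i ∈ (Finset.range (k+1)).erase j, ((x j : ℂ) - x i)⁻¹ := by
        refine Finset.prod_congr rfl fun i hi => ?_
        rw [hvx i (Finset.mem_of_mem_erase hi)]
      rw [e1]
      simp only [div_eq_mul_inv]
      rw [Finset.prod_mul_distrib]
      have e2 : (x j : ℂ) - t = -((t:ℂ) - x j) := by ring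
      have e3 : (t:ℂ) - x j ≠ 0 := by
        rw [sub_ne_zero]; exact_mod_cast ht j hj
      rw [e2, inv_neg]
      field_simp
    have e4 : P * S = Φ t + ∑ j ∈ Finset.range (k+1),
        (P * Lagrange.nodalWeight (Finset.range (k+2)) v j) * Φ (x j) := by
      rw [hS]
      conv_lhs => rw [hs]
      rw [Finset.sum_insert hnot, mul_add, ← hs, hw1, hvt, ← mul_assoc, mul_inv_cancel₀ hP0,
        one_mul, Finset.mul_sum]
      congr 1
      refine Finset.sum_congr rfl fun i hi => ?_
      rw [hvx i hi, mul_assoc]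
    rw [e4, add_assoc, ← Finset.sum_add_distrib, Finset.sum_eq_zero, add_zero]
    intro j hj
    rw [hw2 j hj]
    ring
  rw [key]
  refine (norm_add_le _ _).trans (add_le_add ?_ ?_)
  · rw [norm_mul]
    calc ‖P‖ * ‖S‖ ≤ L^(k+1) * (M * ((5/2*L)^(k+1))⁻¹) := by gcongr
      _ = M * (2/5)^(k+1) := by
        rw [mul_pow, div_pow, div_pow]; field_simp
  · refine (norm_sum_le _ _).trans (le_of_eq ?_)
    refine Finset.sum_congr rfl fun j hj => ?_
    rw [norm_mul, norm_prod]
    congr 1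
    refine Finset.prod_congr rfl fun i hi => ?_
    rw [norm_div, ← Complex.ofReal_sub, ← Complex.ofReal_sub, Complex.norm_real, Complex.norm_real,
      Real.norm_eq_abs, Real.norm_eq_abs]

/-- If all the values on the nodes are below `lam`, the value at `t` is small. -/
lemma kov_core (k : ℕ) (x : ℕ → ℝ) (δ : ℝ) (hδ : 0 < δ) (hx : ∀ i < k, x i + δ ≤ x (i+1))
    (t L M lam : ℝ) (hL : 0 < L) (ht : ∀ i ∈ Finset.range (k+1), t ≠ x i)
    (htL : ∀ i ∈ Finset.range (k+1), |t - x i| ≤ L) (Φ : ℂ → ℂ)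
    (hΦ : DifferentiableOn ℂ Φ (Metric.closedBall (t:ℂ) (7/2*L)))
    (hM : ∀ z ∈ Metric.closedBall (t:ℂ) (7/2*L), ‖Φ z‖ ≤ M)
    (hlam : ∀ i ∈ Finset.range (k+1), ‖Φ (x i)‖ ≤ lam) :
    ‖Φ t‖ ≤ M * (2/5)^(k+1) + lam * ((L/δ)^k * (2^k / k.factorial)) := by
  have hlam0 : 0 ≤ lam := (norm_nonneg _).trans (hlam 0 (by simp))
  have hgap : ∀ i j, i ∈ Finset.range (k+1) → j ∈ Finset.range (k+1) →
      |(i:ℝ) - j| * δ ≤ |x i - x j| := fun i j hi hj =>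
    kov_gap' k x δ hx i j (by have := Finset.mem_range.1 hi; omega)
      (by have := Finset.mem_range.1 hj; omega)
  have hinj : Set.InjOn x (Finset.range (k+1)) := by
    intro i hi j hj hij
    have := hgap i j hi hj
    rw [hij, sub_self, abs_zero] at this
    by_contra hne
    have h0 : 0 < |(i:ℝ) - j| := abs_pos.2 (sub_ne_zero.2 (by exact_mod_cast hne))
    nlinarith [mul_pos h0 hδ]
  refine (kov_interp k x hinj t L M hL ht htL Φ hΦ hM).trans ?_
  gcongr
  rw [← kov_sum, Finset.mul_sum, Finset.mul_sum]
  refine Finset.sum_le_sum fun j hj => ?_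
  have hjk : j ≤ k := by have := Finset.mem_range.1 hj; omega
  refine mul_le_mul (hlam j hj) ?_ (Finset.prod_nonneg fun _ _ => by positivity) hlam0
  have hp := kov_prod j (k - j)
  rw [show j + (k-j) + 1 = k+1 by omega] at hp
  have hcard : ((Finset.range (k+1)).erase j).card = k := by
    rw [Finset.card_erase_of_mem hj]; simp
  calc ∏ i ∈ (Finset.range (k+1)).erase j, (|t - x i| / |x j - x i|)
      ≤ ∏ i ∈ (Finset.range (k+1)).erase j, ((L/δ) * (|(j:ℝ) - i|)⁻¹) := by
        refine Finset.prod_le_prod (fun _ _ => by positivity) fun i hi => ?_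
        have hi' := Finset.mem_of_mem_erase hi
        have hne : j ≠ i := (Finset.ne_of_mem_erase hi).symm
        have h0 : 0 < |(j:ℝ) - i| := abs_pos.2 (sub_ne_zero.2 (by exact_mod_cast hne))
        calc |t - x i| / |x j - x i| ≤ L / (|(j:ℝ) - i| * δ) :=
              div_le_div₀ hL.le (htL i hi') (by positivity) (hgap j i hj hi')
          _ = _ := by field_simp
    _ = (L/δ)^k * (1 / (j.factorial * (k-j).factorial)) := by
        rw [Finset.prod_mul_distrib, Finset.prod_inv_distrib, hp, Finset.prod_const, hcard, one_div]

theorem kovrijkine_lemma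
    (a b : ℝ) (hab : a < b)
    (J : Set ℝ) (hJmeas : MeasurableSet J) (hJsub : J ⊆ Icc a b) (hJpos : 0 < volume J)
    (Φ : ℂ → ℂ)
    (DI : Set ℂ) (hDI : DI = {z : ℂ | Metric.infDist z ((fun x : ℝ => (x : ℂ)) '' Icc a b) < 4 * (b - a)})
    (hΦanal : DifferentiableOn ℂ Φ DI)
    (hΦbdd : ∃ K : ℝ, ∀ z ∈ DI, ‖Φ z‖ ≤ K)
    (hΦne : ∃ z ∈ DI, Φ z ≠ 0)
    (M m : ℝ)
    (hM : M = sSup ((fun z => ‖Φ z‖) '' DI))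
    (hm : m = sSup ((fun x : ℝ => ‖Φ (x : ℂ)‖) '' Icc a b)) :
    (∫ s in Icc a b, ‖Φ (s : ℂ)‖ ^ 2) ≤
      (300 * (b - a) / (volume J).toReal) ^ (2 * Real.log (M / m) / Real.log 2 + 1) *
        ∫ s in J, ‖Φ (s : ℂ)‖ ^ 2 := by
  have hL : 0 < b - a := sub_pos.2 hab
  have hball : ∀ t ∈ Icc a b, Metric.closedBall (t:ℂ) (7/2*(b-a)) ⊆ DI := by
    intro t ht z hz
    rw [hDI, mem_ofPred_eq]
    have h1 := Metric.infDist_le_dist_of_mem (x := z)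
      (mem_image_of_mem (fun x : ℝ => (x : ℂ)) ht)
    have h2 := Metric.mem_closedBall.1 hz
    linarith
  have hmem : ∀ t ∈ Icc a b, (t:ℂ) ∈ DI := fun t ht =>
    hball t ht (Metric.mem_closedBall_self (by positivity))
  have hcont : ContinuousOn (fun x : ℝ => ‖Φ (x:ℂ)‖) (Icc a b) :=
    (hΦanal.continuousOn.comp Complex.continuous_ofReal.continuousOn hmem).norm
  obtain ⟨t, ht, htmax⟩ := isCompact_Icc.exists_isMaxOn (nonempty_Icc.2 hab.le) hcont
  have htmax' : ∀ x ∈ Icc a b, ‖Φ (x:ℂ)‖ ≤ ‖Φ (t:ℂ)‖ := fun x hx => htmax hx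
  have hmt : m = ‖Φ (t:ℂ)‖ := by
    rw [hm]
    refine IsGreatest.csSup_eq ⟨mem_image_of_mem _ ht, ?_⟩
    rintro _ ⟨x, hx, rfl⟩
    exact htmax' x hx
  have hMle : ∀ z ∈ DI, ‖Φ z‖ ≤ M := by
    intro z hz
    rw [hM]
    refine le_csSup ?_ (mem_image_of_mem _ hz)
    obtain ⟨K, hK⟩ := hΦbdd
    refine ⟨K, ?_⟩
    rintro _ ⟨w, hw, rfl⟩
    exact hK w hw
  have hJfin : volume J ≠ ⊤ := ((measure_mono hJsub).trans_lt measure_Icc_lt_top).ne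
  set l := (volume J).toReal with hl
  have hl0 : 0 < l := ENNReal.toReal_pos hJpos.ne' hJfin
  have hlL : l ≤ b - a := by
    have := ENNReal.toReal_mono measure_Icc_lt_top.ne (measure_mono (μ := volume) hJsub)
    rwa [Real.volume_Icc, ENNReal.toReal_ofReal hL.le] at this
  have hJl : volume J = ENNReal.ofReal l := (ENNReal.ofReal_toReal hJfin).symm
  have hint : IntegrableOn (fun s : ℝ => ‖Φ (s:ℂ)‖ ^ 2) (Icc a b) :=
    (hcont.pow 2).integrableOn_Icc
  have hIle : (∫ s in Icc a b, ‖Φ (s : ℂ)‖ ^ 2) ≤ m^2 * (b - a) := by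
    have h1 : (∫ s in Icc a b, ‖Φ (s : ℂ)‖ ^ 2) ≤ ∫ s in Icc a b, m^2 := by
      refine setIntegral_mono_on hint (integrableOn_const (by simp)) measurableSet_Icc ?_
      intro x hx
      have := htmax' x hx
      rw [← hmt] at this
      gcongr
    refine h1.trans (le_of_eq ?_)
    rw [setIntegral_const, Measure.real, Real.volume_Icc, ENNReal.toReal_ofReal hL.le, smul_eq_mul,
      mul_comm]
  have hJ0 : 0 ≤ ∫ s in J, ‖Φ (s : ℂ)‖ ^ 2 := integral_nonneg fun _ => by positivity
  have hm0 : 0 ≤ m := hmt ▸ norm_nonneg _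
  rcases hm0.eq_or_lt with hm0 | hm0
  · rw [← hm0] at hIle
    refine hIle.trans ?_
    rw [zero_pow two_ne_zero, zero_mul]
    exact mul_nonneg (Real.rpow_nonneg (by positivity) _) hJ0
  have hmM : m ≤ M := hmt ▸ hMle _ (hmem t ht)
  have hlog2 : 0 < Real.log 2 := Real.log_pos one_lt_two
  set A := Real.log (M / m) / Real.log 2 with hA
  have hA0 : 0 ≤ A := div_nonneg (Real.log_nonneg ((one_le_div hm0).2 hmM)) hlog2.le
  set k := ⌊A⌋₊ with hk
  have hkA : (k:ℝ) ≤ A := Nat.floor_le hA0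
  have hAk : A < k + 1 := Nat.lt_floor_add_one A
  have hMk : M < m * 2^(k+1) := by
    rw [hA, div_lt_iff₀ hlog2] at hAk
    have h1 : Real.log (M / m) < Real.log (2^(k+1)) := by
      rw [Real.log_pow]; push_cast; exact hAk
    have h2 := (Real.log_lt_log_iff (div_pos (hm0.trans_le hmM) hm0) (by positivity)).1 h1
    rw [div_lt_iff₀ hm0] at h2
    linarith
  set lam := m/5 * (l/(12*(b-a)))^k with hlam
  have hlam0 : 0 < lam := by positivity
  have hlamm : lam < m := by
    have : (l/(12*(b-a)))^k ≤ 1 := by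
      refine pow_le_one₀ (by positivity) ?_
      rw [div_le_one (by positivity)]
      linarith
    rw [hlam]
    nlinarith
  set F : Set ℝ := J ∩ (Icc a b ∩ (fun x : ℝ => ‖Φ (x:ℂ)‖) ⁻¹' (Ici lam)) with hF
  have hFm : MeasurableSet F :=
    hJmeas.inter (hcont.preimage_isClosed_of_isClosed isClosed_Icc isClosed_Ici).measurableSet
  have hFJ : F ⊆ J := inter_subset_left
  have hE : volume (J \ F) ≤ ENNReal.ofReal (l/2) := by
    by_contra hcon
    rw [not_le] at hcon
    have hδ : 0 < l / (2 * ((k:ℝ)+1)) := by positivity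
    have hkδ : ENNReal.ofReal (k * (l / (2 * ((k:ℝ)+1)))) < volume (J \ F) := by
      refine lt_of_le_of_lt (ENNReal.ofReal_le_ofReal ?_) hcon
      rw [mul_div_assoc', div_le_div_iff₀ (by positivity) (by positivity)]
      nlinarith
    have hbdd : BddBelow (J \ F) := bddBelow_Icc.mono (sdiff_subset.trans hJsub)
    obtain ⟨x, hx1, hx2⟩ := kov_sep k _ hbdd _ hδ hkδ
    have hxI : ∀ i ∈ Finset.range (k+1), x i ∈ Icc a b := fun i hi =>
      hJsub (hx1 i (by have := Finset.mem_range.1 hi; omega)).1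
    have hxlam : ∀ i ∈ Finset.range (k+1), ‖Φ (x i)‖ < lam := by
      intro i hi
      have h1 := hx1 i (by have := Finset.mem_range.1 hi; omega)
      by_contra h2
      exact h1.2 ⟨h1.1, hxI i hi, not_lt.1 h2⟩
    have h := kov_core k x _ hδ hx2 t (b-a) M lam hL
      (by
        rintro i hi rfl
        have := hxlam i hi
        rw [← hmt] at this
        linarith)
      (by
        intro i hi
        have := hxI i hi
        rw [abs_le]
        constructor <;> linarith [ht.1, ht.2, this.1, this.2])
      Φ (hΦanal.mono (hball t ht)) (fun z hz => hMle z (hball t ht hz))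
      (fun i hi => (hxlam i hi).le)
    rw [← hmt] at h
    have e1 : M * (2/5)^(k+1) < 4/5 * m := by
      calc M * (2/5)^(k+1) < (m * 2^(k+1)) * (2/5)^(k+1) := by gcongr
        _ = m * (4/5)^(k+1) := by rw [mul_assoc, ← mul_pow]; norm_num
        _ ≤ m * (4/5)^1 := by
          gcongr m * ?_
          exact pow_le_pow_of_le_one (by norm_num) (by norm_num) (by omega)
        _ = 4/5 * m := by ring
    have e2 : lam * (((b-a)/(l / (2 * ((k:ℝ)+1))))^k * (2^k / k.factorial)) ≤ m/5 := by
      have e3 : lam * (((b-a)/(l / (2 * ((k:ℝ)+1))))^k * (2^k / k.factorial)) =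
          m/5 * (((k:ℝ)+1)^k / (3^k * k.factorial)) := by
        rw [hlam]
        have : (l/(12*(b-a)))^k * ((b-a)/(l / (2 * ((k:ℝ)+1))))^k * 2^k =
            ((k:ℝ)+1)^k / 3^k := by
          rw [← mul_pow, ← mul_pow, ← div_pow]
          congr 1
          field_simp
          norm_num
        calc _ = m/5 * ((l/(12*(b-a)))^k * ((b-a)/(l / (2 * ((k:ℝ)+1))))^k * 2^k)
              / k.factorial := by ring
          _ = _ := by rw [this]; field_simp
      rw [e3]
      have : ((k:ℝ)+1)^k / (3^k * k.factorial) ≤ 1 :=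
        (div_le_one (by positivity)).2 (kov_fact k)
      nlinarith
    linarith
  have hFvol : l/2 ≤ (volume F).toReal := by
    have hFfin : volume F ≠ ⊤ := ((measure_mono hFJ).trans_lt hJfin.lt_top).ne
    have h1 : volume J ≤ ENNReal.ofReal (l/2) + volume F := by
      calc volume J ≤ volume ((J \ F) ∪ F) := measure_mono (by rw [sdiff_union_self]; exact subset_union_left)
        _ ≤ volume (J \ F) + volume F := measure_union_le _ _
        _ ≤ _ := by gcongr
    have h2 := ENNReal.toReal_mono (ENNReal.add_ne_top.2 ⟨ENNReal.ofReal_ne_top, hFfin⟩) h1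
    rw [ENNReal.toReal_add ENNReal.ofReal_ne_top hFfin, ENNReal.toReal_ofReal (by positivity)] at h2
    linarith
  have hJge : lam^2 * (l/2) ≤ ∫ s in J, ‖Φ (s : ℂ)‖ ^ 2 := by
    have hintJ := hint.mono_set hJsub
    calc lam^2 * (l/2) ≤ lam^2 * (volume F).toReal := by gcongr
      _ = ∫ s in F, lam^2 := by rw [setIntegral_const, Measure.real, smul_eq_mul, mul_comm]
      _ ≤ ∫ s in F, ‖Φ (s : ℂ)‖ ^ 2 := by
        refine setIntegral_mono_on (integrableOn_const
          ((measure_mono hFJ).trans_lt hJfin.lt_top).ne) (hintJ.mono_set hFJ) hFm ?_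
        intro x hx
        have : lam ≤ ‖Φ (x:ℂ)‖ := hx.2.2
        gcongr
      _ ≤ _ := by
        refine setIntegral_mono_set hintJ ?_ hFJ.eventuallyLE
        exact Filter.Eventually.of_forall fun _ => by positivity
  have hX1 : 1 ≤ 300 * (b - a) / l := by
    rw [one_le_div hl0]; linarith
  have hpow : (300 * (b - a) / l)^(2*k+1) ≤
      (300 * (b - a) / l) ^ (2 * Real.log (M / m) / Real.log 2 + 1) := by
    rw [← Real.rpow_natCast]
    refine Real.rpow_le_rpow_of_exponent_le hX1 ?_
    rw [mul_div_assoc, ← hA]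
    push_cast
    linarith
  calc (∫ s in Icc a b, ‖Φ (s : ℂ)‖ ^ 2) ≤ m^2 * (b - a) := hIle
    _ ≤ m^2 * (b - a) * (6 * 25^(2*k)) := by
      refine le_mul_of_one_le_right (by positivity) ?_
      have : (1:ℝ) ≤ 25^(2*k) := one_le_pow₀ (by norm_num)
      linarith
    _ = (300 * (b - a) / l)^(2*k+1) * (lam^2 * (l/2)) := by
      have : (300 * (b - a) / l)^(2*k) * ((l/(12*(b-a)))^k)^2 = 25^(2*k) := by
        rw [← pow_mul, mul_comm k 2, ← mul_pow]
        congr 1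
        field_simp
        norm_num
      rw [hlam, pow_succ (300 * (b - a) / l) (2*k), mul_pow, ← this]
      generalize (300 * (b - a) / l)^(2*k) = u
      generalize ((l/(12*(b-a)))^k)^2 = w
      field_simp
      ring
    _ ≤ _ := mul_le_mul hpow hJge (by positivity) (Real.rpow_nonneg (by positivity) _)
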